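/- Sail vertices of an angle between two lines in normal position: let α > 1 and −1 < β < 0 be irrational real numbers, with continued fraction expansions α = [a₀; a₁, a₂, …] (convergents pₖ/qₖ) and −β = [0; b₁, b₂, …] (convergents p̃ₖ/q̃ₖ). Then the set of extreme points of the convex hull of the set S = {(x, y) ∈ ℤ² : x > 0, βx < y < αx} is exactly {(q₂ₖ, p₂ₖ) : k ≥ 0} ∪ {(q̃₂ₖ, −p̃₂ₖ) : k ≥ 0} (note (q̃₀, −p̃₀) = (1, 0)). -/

import Mathlib

/-- `a` is the sequence of partial quotients of the (regular) continued fraction expansion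
`ξ = [a₀; a₁, a₂, …]`. -/
def IsCFExpansion (ξ : ℝ) (a : ℕ → ℤ) : Prop :=
  ∃ w : ℕ → ℝ, w 0 = ξ ∧ ∀ n, a n = ⌊w n⌋ ∧ w (n + 1) = 1 / (w n - (a n : ℝ))

/-- `p k / q k` are the convergents of the continued fraction with partial quotients `a`. -/
def IsConvergents (a : ℕ → ℤ) (p q : ℕ → ℤ) : Prop :=
  p 0 = a 0 ∧ q 0 = 1 ∧ p 1 = a 1 * a 0 + 1 ∧ q 1 = a 1 ∧
    ∀ k : ℕ, p (k + 2) = a (k + 2) * p (k + 1) + p k ∧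
      q (k + 2) = a (k + 2) * q (k + 1) + q k

/-!
An extreme point of the hull of the lattice points of an angle cannot be a sum of two of these
points, nor the midpoint of two distinct ones. The rays through the even convergents `(q₂ₖ, p₂ₖ)`
of `α` and through those of `-β`, reflected in the horizontal axis, cut the angle into cones. In
each cone the two points on the boundary rays are `e` and `e + a • o` for a lattice basis `e, o`,
and splitting the coordinates in this basis rules out every lattice point of the cone other than
`e` and `e + a • o`. Conversely `e = (q₂ₖ, p₂ₖ)` is exposed: with `o = (q₂ₖ₊₁, p₂ₖ₊₁)`, the
functional `v = s • e + t • o ↦ q₂ₖ s + v.1` has its minimum over the angle at `e` alone.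
-/

theorem mul_add_mul_pos_of_pos {R : Type*} [CommRing R] [LinearOrder R] [IsStrictOrderedRing R]
    {x y a s t : R} (hx : 0 < x) (hxy : 0 < x + a * y) (hs : 0 < s) (ht : 0 ≤ t)
    (hta : t ≤ a * s) : 0 < s * x + t * y := by
  rcases le_total 0 y with hy | hy
  · exact add_pos_of_pos_of_nonneg (mul_pos hs hx) (mul_nonneg ht hy)
  · calc 0 < s * (x + a * y) := mul_pos hs hxy
      _ = s * x + a * s * y := by ring
      _ ≤ s * x + t * y := by gcongr s * x + ?_; exact mul_le_mul_of_nonpos_right hta hy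

theorem exists_nonneg_and_succ_neg {t : ℕ → ℤ} (h0 : 0 ≤ t 0) (ht : StrictAnti t) :
    ∃ k, 0 ≤ t k ∧ t (k + 1) < 0 := by
  by_contra! hstep
  have hnonneg : ∀ k, 0 ≤ t k := Nat.rec h0 hstep
  exact not_strictAnti_of_wellFoundedLT (fun k ↦ (t k).toNat) fun k l hkl ↦
    (Int.toNat_lt_toNat ((hnonneg l).trans_lt (ht hkl))).2 (ht hkl)

section ConvexHull

variable {𝕜 E : Type*} [Field 𝕜] [LinearOrder 𝕜] [IsStrictOrderedRing 𝕜]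
  [AddCommGroup E] [Module 𝕜 E] {S : Set E} {v : E}

theorem lt_of_mem_convexHull_of_ne (f : E →ₗ[𝕜] 𝕜) (hv : v ∈ S)
    (hf : ∀ s ∈ S, s ≠ v → f v < f s) {x : E} (hx : x ∈ convexHull 𝕜 S) (hxv : x ≠ v) :
    f v < f x := by
  rw [← Set.insert_sdiff_self_of_mem hv] at hx
  rcases (S \ {v}).eq_empty_or_nonempty with hS | hS
  · simp only [hS, insert_empty_eq, convexHull_singleton, Set.mem_singleton_iff] at hx
    exact absurd hx hxv
  rw [convexHull_insert hS, convexJoin_singleton_left, Set.mem_iUnion₂] at hx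
  obtain ⟨y, hy, b, c, -, hc, hbc, rfl⟩ := hx
  have hfy : f v < f y :=
    convexHull_min (fun s hs ↦ hf s hs.1 hs.2) (convex_halfSpace_gt f.isLinear (f v)) hy
  have hc0 : c ≠ 0 := by
    rintro rfl
    rw [add_zero] at hbc
    simp [hbc] at hxv
  calc f v = b * f v + c * f v := by rw [← add_mul, hbc, one_mul]
    _ < b * f v + c * f y := by gcongr
    _ = f (b • v + c • y) := by simp

theorem mem_extremePoints_convexHull_of_forall_lt (f : E →ₗ[𝕜] 𝕜) (hv : v ∈ S)
    (hf : ∀ s ∈ S, s ≠ v → f v < f s) : v ∈ (convexHull 𝕜 S).extremePoints 𝕜 := by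
  have hdiff : convexHull 𝕜 S \ {v} = convexHull 𝕜 S ∩ {x | f v < f x} := by
    ext x
    refine and_congr_right fun hx ↦ ⟨lt_of_mem_convexHull_of_ne f hv hf hx, ?_⟩
    rintro hlt rfl
    exact lt_irrefl _ hlt
  rw [(convex_convexHull 𝕜 S).mem_extremePoints_iff_convex_sdiff, hdiff]
  exact ⟨subset_convexHull 𝕜 S hv,
    (convex_convexHull 𝕜 S).inter (convex_halfSpace_gt f.isLinear (f v))⟩

theorem eq_zero_of_mem_extremePoints_convexHull {w : E}
    (hv : v ∈ (convexHull 𝕜 S).extremePoints 𝕜) (hadd : v + w ∈ S) (hsub : v - w ∈ S) :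
    w = 0 := by
  have hmid : v ∈ openSegment 𝕜 (v + w) (v - w) :=
    ⟨2⁻¹, 2⁻¹, by positivity, by positivity, by norm_num, by module⟩
  simpa using (mem_extremePoints.1 hv).2 _ (subset_convexHull 𝕜 S hadd) _
    (subset_convexHull 𝕜 S hsub) hmid |>.1

end ConvexHull

/-- The inclusion of the lattice `ℤ²` into the plane. -/
def latticeToPlane : ℤ × ℤ →+ ℝ × ℝ :=
  (Int.castAddHom ℝ).prodMap (Int.castAddHom ℝ)

@[simp]
theorem latticeToPlane_apply (v : ℤ × ℤ) : latticeToPlane v = ((v.1 : ℝ), (v.2 : ℝ)) :=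
  rfl

theorem latticeToPlane_injective : Function.Injective latticeToPlane :=
  Int.cast_injective.prodMap Int.cast_injective

/-- The extreme points of the convex hull of a set of lattice points, as lattice points. -/
def hullVertices (S : Set (ℤ × ℤ)) : Set (ℤ × ℤ) :=
  latticeToPlane ⁻¹' (convexHull ℝ (latticeToPlane '' S)).extremePoints ℝ

section HullVertices

variable {S : Set (ℤ × ℤ)} {v w : ℤ × ℤ}

theorem image_hullVertices (S : Set (ℤ × ℤ)) :
    latticeToPlane '' hullVertices S =
      (convexHull ℝ (latticeToPlane '' S)).extremePoints ℝ :=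
  Set.image_preimage_eq_of_subset
    (extremePoints_convexHull_subset.trans (Set.image_subset_range _ _))

theorem hullVertices_subset (S : Set (ℤ × ℤ)) : hullVertices S ⊆ S := fun _ hv ↦
  latticeToPlane_injective.mem_set_image.1 (extremePoints_convexHull_subset hv)

theorem mem_hullVertices_of_forall_lt (c d : ℤ) (hv : v ∈ S)
    (hlt : ∀ u ∈ S, u ≠ v → c * v.1 + d * v.2 < c * u.1 + d * u.2) : v ∈ hullVertices S := by
  refine mem_extremePoints_convexHull_of_forall_lt
    ((c : ℝ) • LinearMap.fst ℝ ℝ ℝ + (d : ℝ) • LinearMap.snd ℝ ℝ ℝ) (Set.mem_image_of_mem _ hv) ?_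
  rintro _ ⟨u, hu, rfl⟩ huv
  simpa using mod_cast hlt u hu (ne_of_apply_ne _ huv)

theorem eq_zero_of_mem_hullVertices (hv : v ∈ hullVertices S) (hadd : v + w ∈ S)
    (hsub : v - w ∈ S) : w = 0 :=
  latticeToPlane_injective <| (eq_zero_of_mem_extremePoints_convexHull hv
    (map_add latticeToPlane v w ▸ Set.mem_image_of_mem _ hadd)
    (map_sub latticeToPlane v w ▸ Set.mem_image_of_mem _ hsub)).trans (map_zero _).symm

end HullVertices

/-- The lattice points of the open angle `{(x, y) : x > 0, β x < y < α x}`. -/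
def latticeAngle (β α : ℝ) : Set (ℤ × ℤ) :=
  {v | 0 < v.1 ∧ β * v.1 < v.2 ∧ (v.2 : ℝ) < α * v.1}

section LatticeAngle

variable {α β : ℝ} {e o u v : ℤ × ℤ}

theorem add_mem_latticeAngle (hu : u ∈ latticeAngle β α) (hv : v ∈ latticeAngle β α) :
    u + v ∈ latticeAngle β α := by
  obtain ⟨hu₀, hu₁, hu₂⟩ := hu
  obtain ⟨hv₀, hv₁, hv₂⟩ := hv
  refine ⟨add_pos hu₀ hv₀, ?_, ?_⟩ <;> push_cast [Prod.fst_add, Prod.snd_add] <;> linarith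

theorem add_notMem_hullVertices_latticeAngle (hu : u ∈ latticeAngle β α)
    (hv : v ∈ latticeAngle β α) : u + v ∉ hullVertices (latticeAngle β α) := by
  intro huv
  have hu0 : u = 0 := eq_zero_of_mem_hullVertices huv
    (add_mem_latticeAngle (add_mem_latticeAngle hu hv) hu) (by rwa [add_sub_cancel_left])
  exact hu.1.ne' (congrArg Prod.fst hu0)

theorem smul_add_smul_mem_latticeAngle {a s t : ℤ} (he : e ∈ latticeAngle β α)
    (heo : e + a • o ∈ latticeAngle β α) (hs : 0 < s) (ht : 0 ≤ t) (hta : t ≤ a * s) :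
    s • e + t • o ∈ latticeAngle β α := by
  obtain ⟨he₀, he₁, he₂⟩ := he
  obtain ⟨heo₀, heo₁, heo₂⟩ := heo
  simp only [latticeAngle, Set.mem_ofPred_eq, Prod.fst_add, Prod.snd_add, Prod.smul_fst,
    Prod.smul_snd, smul_eq_mul, Int.cast_add, Int.cast_mul] at heo₀ heo₁ heo₂ ⊢
  have hs' : (0 : ℝ) < s := mod_cast hs
  have ht' : (0 : ℝ) ≤ t := mod_cast ht
  have hta' : (t : ℝ) ≤ a * s := mod_cast hta
  refine ⟨mul_add_mul_pos_of_pos he₀ heo₀ hs ht hta, ?_, ?_⟩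
  · have := mul_add_mul_pos_of_pos (x := (e.2 : ℝ) - β * e.1) (y := o.2 - β * o.1)
      (by linarith) (by linarith) hs' ht' hta'
    linarith
  · have := mul_add_mul_pos_of_pos (x := α * e.1 - (e.2 : ℝ)) (y := α * o.1 - o.2)
      (by linarith) (by linarith) hs' ht' hta'
    linarith

theorem eq_or_eq_of_mem_hullVertices_latticeAngle {a s t : ℤ} (he : e ∈ latticeAngle β α)
    (heo : e + a • o ∈ latticeAngle β α) (hs : 0 < s) (ht : 0 ≤ t) (hta : t ≤ a * s)
    (hv : s • e + t • o ∈ hullVertices (latticeAngle β α)) :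
    s • e + t • o = e ∨ s • e + t • o = e + a • o := by
  have hcone {s t : ℤ} := smul_add_smul_mem_latticeAngle (s := s) (t := t) he heo
  obtain rfl | hs1 : s = 1 ∨ 1 < s := by omega
  · rw [one_smul] at hv ⊢
    rw [mul_one] at hta
    obtain rfl | ht0 := ht.eq_or_lt
    · simp
    obtain rfl | hta := hta.eq_or_lt
    · simp
    have ho : o = 0 := by
      apply eq_zero_of_mem_hullVertices hv
      · convert hcone one_pos (t := t + 1) (by omega) (by omega) using 1
        module
      · convert hcone one_pos (t := t - 1) (by omega) (by omega) using 1
        module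
    simp [ho]
  · have ha : 0 ≤ a := nonneg_of_mul_nonneg_left (ht.trans hta) hs
    have hsplit : (1 : ℤ) • e + min t a • o + ((s - 1) • e + (t - min t a) • o) =
        s • e + t • o := by module
    have hrest : t - min t a ≤ a * (s - 1) := by
      rcases min_cases t a with ⟨h, -⟩ | ⟨h, -⟩ <;> rw [h]
      · simpa using mul_nonneg ha (by omega)
      · linarith
    rw [← hsplit] at hv
    exact absurd hv (add_notMem_hullVertices_latticeAngle
      (hcone one_pos (le_min ht ha) (by simp)) (hcone (by omega) (by simp) hrest))

theorem latticeAngle_neg_neg (β α : ℝ) :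
    latticeAngle (-α) (-β) = (fun v ↦ (v.1, -v.2)) '' latticeAngle β α := by
  rw [Set.image_eq_preimage_of_inverse (g := fun v ↦ (v.1, -v.2)) (fun v ↦ by simp)
    (fun v ↦ by simp)]
  ext v
  simp only [latticeAngle, Set.mem_preimage, Set.mem_ofPred_eq, Int.cast_neg, neg_mul]
  rw [neg_lt, lt_neg, and_comm (a := -_ < _)]

theorem mk_neg_mem_hullVertices_latticeAngle {x y : ℤ} :
    (x, -y) ∈ hullVertices (latticeAngle (-α) (-β)) ↔
      (x, y) ∈ hullVertices (latticeAngle β α) := by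
  let reflect : (ℝ × ℝ) ≃ₗ[ℝ] ℝ × ℝ := (LinearEquiv.refl ℝ ℝ).prodCongr (LinearEquiv.neg ℝ)
  have hreflect (v : ℤ × ℤ) : latticeToPlane (v.1, -v.2) = reflect (latticeToPlane v) := by
    simp [reflect]
  have himage : latticeToPlane '' latticeAngle (-α) (-β) =
      reflect '' (latticeToPlane '' latticeAngle β α) := by
    simp only [latticeAngle_neg_neg, Set.image_image, hreflect]
  have hhull : (convexHull ℝ (latticeToPlane '' latticeAngle (-α) (-β))).extremePoints ℝ =
      reflect '' (convexHull ℝ (latticeToPlane '' latticeAngle β α)).extremePoints ℝ := by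
    rw [himage, image_extremePoints]
    exact congrArg _ (reflect.toLinearMap.image_convexHull _).symm
  rw [hullVertices, Set.mem_preimage, hreflect (x, y), hhull, reflect.injective.mem_set_image,
    hullVertices, Set.mem_preimage]

theorem eq_or_eq_of_mem_hullVertices_of_between {m n : ℤ}
    (hm : (1, m) ∈ latticeAngle β α) (hn : (1, n) ∈ latticeAngle β α)
    (hv : v ∈ hullVertices (latticeAngle β α)) (hmv : m * v.1 ≤ v.2) (hvn : v.2 ≤ n * v.1) :
    v = (1, m) ∨ v = (1, n) := by
  have hedge : ((1, m) + (n - m) • (0, 1) : ℤ × ℤ) = (1, n) := by simp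
  have hcoord : v.1 • (1, m) + (v.2 - m * v.1) • (0, 1) = v := by ext <;> simp; ring
  rw [← hedge] at hn
  have := eq_or_eq_of_mem_hullVertices_latticeAngle (s := v.1) (t := v.2 - m * v.1) hm hn
    (hullVertices_subset _ hv).1 (by linarith) (by linarith) (hcoord.symm ▸ hv)
  rwa [hcoord, hedge] at this

end LatticeAngle

namespace IsCFExpansion

variable {ξ : ℝ} {a : ℕ → ℤ}

theorem apply_zero (h : IsCFExpansion ξ a) : a 0 = ⌊ξ⌋ := by
  obtain ⟨w, rfl, hw⟩ := h
  exact (hw 0).1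

theorem exists_completeQuotients (h : IsCFExpansion ξ a) (hξ : Irrational ξ) :
    ∃ w : ℕ → ℝ, w 0 = ξ ∧ ∀ n, a n = ⌊w n⌋ ∧ 1 < w (n + 1) ∧ (w n - a n) * w (n + 1) = 1 := by
  obtain ⟨w, hw0, hw⟩ := h
  have hirr : ∀ n, Irrational (w n) := by
    intro n
    induction n with
    | zero => rwa [hw0]
    | succ n ih =>
      rw [(hw n).2, one_div]
      exact (ih.sub_intCast _).inv
  refine ⟨w, hw0, fun n ↦ ?_⟩
  have hpos : 0 < w n - a n := by
    rw [(hw n).1]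
    exact Int.fract_pos.2 ((hirr n).ne_int _)
  have hlt : w n - a n < 1 := by
    rw [(hw n).1]
    exact Int.fract_lt_one _
  rw [(hw n).2]
  exact ⟨(hw n).1, (one_lt_div hpos).2 hlt, mul_one_div_cancel hpos.ne'⟩

theorem one_le_apply_succ (h : IsCFExpansion ξ a) (hξ : Irrational ξ) (n : ℕ) :
    1 ≤ a (n + 1) := by
  obtain ⟨w, -, hw⟩ := h.exists_completeQuotients hξ
  rw [(hw (n + 1)).1, Int.le_floor, Int.cast_one]
  exact (hw n).2.1.le

end IsCFExpansion

namespace IsConvergents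

variable {a p q : ℕ → ℤ}

theorem num_zero (h : IsConvergents a p q) : p 0 = a 0 := h.1

theorem denom_zero (h : IsConvergents a p q) : q 0 = 1 := h.2.1

theorem denom_one (h : IsConvergents a p q) : q 1 = a 1 := h.2.2.2.1

theorem num_add_two (h : IsConvergents a p q) (n : ℕ) :
    p (n + 2) = a (n + 2) * p (n + 1) + p n :=
  (h.2.2.2.2 n).1

theorem denom_add_two (h : IsConvergents a p q) (n : ℕ) :
    q (n + 2) = a (n + 2) * q (n + 1) + q n :=
  (h.2.2.2.2 n).2

theorem det (h : IsConvergents a p q) (n : ℕ) :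
    q n * p (n + 1) - p n * q (n + 1) = (-1) ^ n := by
  obtain ⟨hp0, hq0, hp1, hq1, hrec⟩ := h
  induction n with
  | zero => rw [hp0, hq0, hp1, hq1]; ring
  | succ n ih =>
    rw [(hrec n).1, (hrec n).2, pow_succ, ← ih]
    ring

theorem det_even (h : IsConvergents a p q) (k : ℕ) :
    q (2 * k) * p (2 * k + 1) - p (2 * k) * q (2 * k + 1) = 1 := by
  rw [h.det, pow_mul, neg_one_sq, one_pow]

theorem eq_smul_add_smul (h : IsConvergents a p q) (v : ℤ × ℤ) (k : ℕ) :
    (p (2 * k + 1) * v.1 - q (2 * k + 1) * v.2) • (q (2 * k), p (2 * k)) +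
      (q (2 * k) * v.2 - p (2 * k) * v.1) • (q (2 * k + 1), p (2 * k + 1)) = v := by
  ext
  · simp only [Prod.fst_add, Prod.smul_fst, smul_eq_mul]
    linear_combination v.1 * h.det_even k
  · simp only [Prod.snd_add, Prod.smul_snd, smul_eq_mul]
    linear_combination v.2 * h.det_even k

theorem even_add_smul_odd (h : IsConvergents a p q) (k : ℕ) :
    (q (2 * k), p (2 * k)) + a (2 * k + 2) • (q (2 * k + 1), p (2 * k + 1)) =
      (q (2 * (k + 1)), p (2 * (k + 1))) := by
  rw [mul_add_one, h.denom_add_two, h.num_add_two, Prod.smul_mk, Prod.mk_add_mk, smul_eq_mul,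
    smul_eq_mul, add_comm (q _), add_comm (p _)]

theorem denom_pos (h : IsConvergents a p q) (ha : ∀ n, 1 ≤ a (n + 1)) (n : ℕ) : 0 < q n := by
  induction n using Nat.twoStepInduction with
  | zero => rw [h.denom_zero]; exact one_pos
  | one => rw [h.denom_one]; exact one_pos.trans_le (ha 0)
  | more n ih₀ ih₁ =>
    rw [h.denom_add_two]
    exact add_pos (mul_pos (one_pos.trans_le (ha (n + 1))) ih₁) ih₀

theorem denom_le_succ (h : IsConvergents a p q) (ha : ∀ n, 1 ≤ a (n + 1)) (n : ℕ) :
    q n ≤ q (n + 1) := by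
  cases n with
  | zero =>
    rw [h.denom_zero, h.denom_one]
    exact ha 0
  | succ n =>
    have hq := h.denom_pos ha
    calc q (n + 1) ≤ a (n + 2) * q (n + 1) := le_mul_of_one_le_left (hq _).le (ha (n + 1))
      _ ≤ a (n + 2) * q (n + 1) + q n := le_add_of_nonneg_right (hq n).le
      _ = q (n + 2) := (h.denom_add_two n).symm

theorem mul_denom_le_num (h : IsConvergents a p q) (ha : ∀ n, 1 ≤ a (n + 1)) (n : ℕ) :
    a 0 * q n ≤ p n := by
  obtain ⟨hp0, hq0, hp1, hq1, hrec⟩ := h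
  induction n using Nat.twoStepInduction with
  | zero => rw [hp0, hq0, mul_one]
  | one => rw [hp1, hq1]; linarith
  | more n ih₀ ih₁ =>
    have ha₀ : 0 ≤ a (n + 2) := zero_le_one.trans (ha (n + 1))
    calc a 0 * q (n + 2) = a (n + 2) * (a 0 * q (n + 1)) + a 0 * q n := by rw [(hrec n).2]; ring
      _ ≤ a (n + 2) * p (n + 1) + p n := by gcongr
      _ = p (n + 2) := (hrec n).1.symm

theorem completeQuotient_mul_error (h : IsConvergents a p q) {w : ℕ → ℝ}
    (hw : ∀ n, (w n - a n) * w (n + 1) = 1) (n : ℕ) :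
    w (n + 2) * (w 0 * q (n + 1) - p (n + 1)) = -(w 0 * q n - p n) := by
  obtain ⟨hp0, hq0, hp1, hq1, hrec⟩ := h
  induction n with
  | zero =>
    rw [hp0, hq0, hp1, hq1]
    push_cast
    linear_combination (a 0 - w 0) * hw 1 + w 2 * hw 0
  | succ n ih =>
    rw [(hrec n).1, (hrec n).2]
    push_cast
    linear_combination (p (n + 1) - w 0 * q (n + 1)) * hw (n + 2) + w (n + 3) * ih

theorem error_sign {ξ : ℝ} (h : IsConvergents a p q) (hcf : IsCFExpansion ξ a)
    (hξ : Irrational ξ) (n : ℕ) : 0 < (-1) ^ n * (ξ * q n - p n) := by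
  obtain ⟨w, rfl, hw⟩ := hcf.exists_completeQuotients hξ
  induction n with
  | zero =>
    rw [h.num_zero, h.denom_zero, (hw 0).1]
    simpa using Int.fract_pos.2 (hξ.ne_int _)
  | succ n ih =>
    have hstep := h.completeQuotient_mul_error (fun n ↦ (hw n).2.2) n
    refine pos_of_mul_pos_right (a := w (n + 2)) ?_ (zero_le_one.trans (hw (n + 1)).2.1.le)
    calc 0 < (-1) ^ n * (w 0 * q n - p n) := ih
      _ = w (n + 2) * ((-1) ^ (n + 1) * (w 0 * q (n + 1) - p (n + 1))) := by
        linear_combination -(-1) ^ (n + 1) * hstep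

theorem even_num_lt_mul_denom {ξ : ℝ} (h : IsConvergents a p q) (hcf : IsCFExpansion ξ a)
    (hξ : Irrational ξ) (k : ℕ) : (p (2 * k) : ℝ) < ξ * q (2 * k) := by
  simpa [pow_mul] using h.error_sign hcf hξ (2 * k)

theorem mul_denom_lt_odd_num {ξ : ℝ} (h : IsConvergents a p q) (hcf : IsCFExpansion ξ a)
    (hξ : Irrational ξ) (k : ℕ) : ξ * q (2 * k + 1) < p (2 * k + 1) := by
  simpa [pow_succ, pow_mul] using h.error_sign hcf hξ (2 * k + 1)

section Angle

variable {α β : ℝ}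

theorem even_mem_latticeAngle (h : IsConvergents a p q) (hcf : IsCFExpansion α a)
    (hα : Irrational α) (hβ : β < a 0) (k : ℕ) :
    (q (2 * k), p (2 * k)) ∈ latticeAngle β α := by
  have ha := hcf.one_le_apply_succ hα
  have hq : (0 : ℝ) < q (2 * k) := mod_cast h.denom_pos ha (2 * k)
  refine ⟨h.denom_pos ha _, ?_, h.even_num_lt_mul_denom hcf hα k⟩
  calc β * q (2 * k) < a 0 * q (2 * k) := by gcongr
    _ ≤ p (2 * k) := mod_cast h.mul_denom_le_num ha _

theorem odd_det_pos (h : IsConvergents a p q) (hcf : IsCFExpansion α a)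
    (hα : Irrational α) {v : ℤ × ℤ} (hv : v ∈ latticeAngle β α) (k : ℕ) :
    0 < p (2 * k + 1) * v.1 - q (2 * k + 1) * v.2 := by
  have hq : (0 : ℝ) < q (2 * k + 1) :=
    mod_cast h.denom_pos (hcf.one_le_apply_succ hα) (2 * k + 1)
  have hx : (0 : ℝ) < v.1 := mod_cast hv.1
  have : (q (2 * k + 1) * v.2 : ℝ) < p (2 * k + 1) * v.1 :=
    calc (q (2 * k + 1) * v.2 : ℝ) < q (2 * k + 1) * (α * v.1) := by gcongr; exact hv.2.2
      _ = α * q (2 * k + 1) * v.1 := by ring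
      _ < p (2 * k + 1) * v.1 := by gcongr; exact h.mul_denom_lt_odd_num hcf hα k
  exact sub_pos.2 (mod_cast this)

theorem two_mul_denom_lt (h : IsConvergents a p q) (hcf : IsCFExpansion α a)
    (hα : Irrational α) {v : ℤ × ℤ} (hv : v ∈ latticeAngle β α) (k : ℕ)
    (hne : v ≠ (q (2 * k), p (2 * k))) :
    2 * q (2 * k) < q (2 * k) * (p (2 * k + 1) * v.1 - q (2 * k + 1) * v.2) + v.1 := by
  have ha := hcf.one_le_apply_succ hα
  have hcoord := h.eq_smul_add_smul v k
  have hs := h.odd_det_pos hcf hα hv k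
  have hq := h.denom_pos ha (2 * k)
  have hq' := h.denom_pos ha (2 * k + 1)
  have hqq' := h.denom_le_succ ha (2 * k)
  have hx := hv.1
  set s := p (2 * k + 1) * v.1 - q (2 * k + 1) * v.2
  set t := q (2 * k) * v.2 - p (2 * k) * v.1
  obtain hs1 | hs2 : s = 1 ∨ 2 ≤ s := by omega
  · rw [hs1, one_smul] at hcoord
    have hfst : q (2 * k) + t * q (2 * k + 1) = v.1 := congrArg Prod.fst hcoord
    have ht0 : t ≠ 0 := by
      intro ht
      rw [ht, zero_smul, add_zero] at hcoord
      exact hne hcoord.symm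
    -- As `q₂ₖ ≤ q₂ₖ₊₁`, a negative `t` would move `v` out of the half-plane `x > 0`.
    have ht : -1 < t := lt_of_mul_lt_mul_right (by linarith) hq'.le
    have htq : 0 < t * q (2 * k + 1) := mul_pos (by omega) hq'
    rw [hs1]
    linarith
  · linarith [mul_le_mul_of_nonneg_left hs2 hq.le]

theorem even_mem_hullVertices (h : IsConvergents a p q) (hcf : IsCFExpansion α a)
    (hα : Irrational α) (hβ : β < a 0) (k : ℕ) :
    (q (2 * k), p (2 * k)) ∈ hullVertices (latticeAngle β α) := by
  refine mem_hullVertices_of_forall_lt (q (2 * k) * p (2 * k + 1) + 1)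
    (-(q (2 * k) * q (2 * k + 1))) (h.even_mem_latticeAngle hcf hα hβ k) fun u hu hne ↦ ?_
  have := h.two_mul_denom_lt hcf hα hu k hne
  linear_combination this + q (2 * k) * h.det_even k

theorem exists_eq_even_of_mem_hullVertices (h : IsConvergents a p q) (hcf : IsCFExpansion α a)
    (hα : Irrational α) {v : ℤ × ℤ} (hβ : β < a 0)
    (hv : v ∈ hullVertices (latticeAngle β α)) (hle : a 0 * v.1 ≤ v.2) :
    ∃ k, v = (q (2 * k), p (2 * k)) := by
  have hs := h.odd_det_pos hcf hα (hullVertices_subset _ hv)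
  let t : ℕ → ℤ := fun k ↦ q (2 * k) * v.2 - p (2 * k) * v.1
  have hstep (k : ℕ) : t (k + 1) =
      t k - a (2 * k + 2) * (p (2 * k + 1) * v.1 - q (2 * k + 1) * v.2) := by
    simp only [t, mul_add_one, h.num_add_two, h.denom_add_two]
    ring
  have hanti : StrictAnti t := strictAnti_nat_of_succ_lt fun k ↦ by
    rw [hstep]
    exact sub_lt_self _
      (mul_pos (zero_lt_one.trans_le (hcf.one_le_apply_succ hα (2 * k + 1))) (hs k))
  have ht0 : 0 ≤ t 0 := by simpa [t, h.num_zero, h.denom_zero] using hle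
  obtain ⟨k, hk, hk'⟩ := exists_nonneg_and_succ_neg ht0 hanti
  have hcoord := h.eq_smul_add_smul v k
  have := eq_or_eq_of_mem_hullVertices_latticeAngle (h.even_mem_latticeAngle hcf hα hβ k)
    (h.even_add_smul_odd k ▸ h.even_mem_latticeAngle hcf hα hβ (k + 1)) (hs k) hk
    (by linarith [hstep k]) (hcoord.symm ▸ hv)
  rw [hcoord, h.even_add_smul_odd] at this
  exact this.elim (⟨k, ·⟩) (⟨k + 1, ·⟩)

end Angle

end IsConvergents

theorem hullVertices_latticeAngle {α β : ℝ} {m : ℤ} (hβm : β < m) (hmα : m < α)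
    (hirrα : Irrational α) (hirrβ : Irrational β) {a p q : ℕ → ℤ} (hcfa : IsCFExpansion α a)
    (hconva : IsConvergents a p q) {b pt qt : ℕ → ℤ} (hcfb : IsCFExpansion (-β) b)
    (hconvb : IsConvergents b pt qt) :
    hullVertices (latticeAngle β α) =
      Set.range (fun k ↦ (q (2 * k), p (2 * k))) ∪
        Set.range (fun k ↦ (qt (2 * k), -pt (2 * k))) := by
  have hma : m ≤ a 0 := hcfa.apply_zero ▸ Int.le_floor.2 hmα.le
  have hmb : -m ≤ b 0 := hcfb.apply_zero ▸ Int.le_floor.2 (by push_cast; linarith)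
  have hβa : β < a 0 := hβm.trans_le (mod_cast hma)
  have hαb : -α < b 0 := (neg_lt_neg hmα).trans_le (mod_cast hmb)
  have hupper := hconva.even_mem_hullVertices hcfa hirrα hβa
  have hlower (k : ℕ) : (qt (2 * k), -pt (2 * k)) ∈ hullVertices (latticeAngle β α) := by
    rw [← mk_neg_mem_hullVertices_latticeAngle, neg_neg]
    exact hconvb.even_mem_hullVertices hcfb hirrβ.neg hαb k
  refine Set.Subset.antisymm (fun ⟨x, y⟩ hv ↦ ?_)
    (Set.union_subset (Set.range_subset_iff.2 hupper) (Set.range_subset_iff.2 hlower))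
  rcases le_total (a 0 * x) y with hay | hya
  · obtain ⟨k, hk⟩ := hconva.exists_eq_even_of_mem_hullVertices hcfa hirrα hβa hv hay
    exact .inl ⟨k, hk.symm⟩
  rcases le_total (b 0 * x) (-y) with hby | hyb
  · obtain ⟨k, hk⟩ := hconvb.exists_eq_even_of_mem_hullVertices hcfb hirrβ.neg hαb
      (mk_neg_mem_hullVertices_latticeAngle.2 hv) hby
    obtain ⟨rfl, hy⟩ := Prod.mk.inj hk
    exact .inr ⟨k, by simp [← hy]⟩
  · have hm := hullVertices_subset _ (hlower 0)
    have hn := hullVertices_subset _ (hupper 0)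
    simp only [mul_zero, hconvb.num_zero, hconvb.denom_zero] at hm
    simp only [mul_zero, hconva.num_zero, hconva.denom_zero] at hn
    rcases eq_or_eq_of_mem_hullVertices_of_between hm hn hv (by linarith) hya with hv | hv
    · exact .inr ⟨0, by simp [hv, hconvb.num_zero, hconvb.denom_zero]⟩
    · exact .inl ⟨0, by simp [hv, hconva.num_zero, hconva.denom_zero]⟩

theorem sail_vertices_of_pair_of_lines_general (α β : ℝ) (m : ℤ) (hβm : β < m) (hmα : m < α)
    (hirrα : Irrational α) (hirrβ : Irrational β)
    (a p q : ℕ → ℤ) (hcfa : IsCFExpansion α a) (hconva : IsConvergents a p q)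
    (b pt qt : ℕ → ℤ) (hcfb : IsCFExpansion (-β) b) (hconvb : IsConvergents b pt qt) :
    Set.extremePoints ℝ (convexHull ℝ {v : ℝ × ℝ | ∃ x y : ℤ,
        v = ((x : ℝ), (y : ℝ)) ∧ 0 < x ∧ β * (x : ℝ) < (y : ℝ) ∧ (y : ℝ) < α * (x : ℝ)}) =
      {v : ℝ × ℝ | ∃ k : ℕ, v = ((q (2 * k) : ℝ), (p (2 * k) : ℝ))} ∪
        {v : ℝ × ℝ | ∃ k : ℕ, v = ((qt (2 * k) : ℝ), (-(pt (2 * k)) : ℝ))} := by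
  have hS : {v : ℝ × ℝ | ∃ x y : ℤ, v = ((x : ℝ), (y : ℝ)) ∧ 0 < x ∧ β * (x : ℝ) < (y : ℝ) ∧
      (y : ℝ) < α * (x : ℝ)} = latticeToPlane '' latticeAngle β α := by
    ext v
    simp [latticeAngle, eq_comm, and_comm]
  rw [hS, ← image_hullVertices,
    hullVertices_latticeAngle hβm hmα hirrα hirrβ hcfa hconva hcfb hconvb, Set.image_union,
    ← Set.range_comp, ← Set.range_comp]
  ext v
  simp [eq_comm]

/-- Sail vertices of an angle between two lines in normal position: for irrational `α > 1`
and `−1 < β < 0`, with `α = [a₀; a₁, …]` (convergents `pₖ/qₖ`) and `−β = [0; b₁, b₂, …]`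
(convergents `p̃ₖ/q̃ₖ`), the extreme points of the convex hull of
`S = {(x, y) ∈ ℤ² : x > 0, βx < y < αx}` are exactly
`{(q₂ₖ, p₂ₖ) : k ≥ 0} ∪ {(q̃₂ₖ, −p̃₂ₖ) : k ≥ 0}`. -/
theorem sail_vertices_of_pair_of_lines (α β : ℝ) (hα : 1 < α)
    (hβ₁ : -1 < β) (hβ₂ : β < 0) (hirrα : Irrational α) (hirrβ : Irrational β)
    (a p q : ℕ → ℤ) (hcfa : IsCFExpansion α a) (hconva : IsConvergents a p q)
    (b pt qt : ℕ → ℤ) (hcfb : IsCFExpansion (-β) b) (hconvb : IsConvergents b pt qt) :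
    Set.extremePoints ℝ (convexHull ℝ {v : ℝ × ℝ | ∃ x y : ℤ,
        v = ((x : ℝ), (y : ℝ)) ∧ 0 < x ∧ β * (x : ℝ) < (y : ℝ) ∧ (y : ℝ) < α * (x : ℝ)}) =
      {v : ℝ × ℝ | ∃ k : ℕ, v = ((q (2 * k) : ℝ), (p (2 * k) : ℝ))} ∪
        {v : ℝ × ℝ | ∃ k : ℕ, v = ((qt (2 * k) : ℝ), (-(pt (2 * k)) : ℝ))} :=
  sail_vertices_of_pair_of_lines_general α β 0 (mod_cast hβ₂) (mod_cast one_pos.trans hα)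
    hirrα hirrβ a p q hcfa hconva b pt qt hcfb hconvb
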